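/- Let p(z) = p_0 + p_1 z + ⋯ + p_n z^n be a self-conjugate polynomial of degree n with complex coefficients (p_n ≠ 0) such that p(−i) ≠ 0, and define T(z) = ∑_{k=0}^{n} p_k (−i)^k (z + 1)^k (z − 1)^{n−k}, so that T(z) = (z − 1)^n p(W(z)) where W(z) = −i(z + 1)/(z − 1). Then T is a self-inversive polynomial of degree n, i.e., the multiset of complex zeros of T, counted with multiplicity, is invariant under the map ζ ↦ 1/conj(ζ). -/

import Mathlib

open Polynomial Complex

/-!
For a polynomial `p` of degree `n` with roots `w`, clearing denominators in
`p ((a z + b) / (c z + d))` turns each factor `z - w` of `p` into the linear factor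
`(a z + b) - w (c z + d) = (a - c w) z - (d w - b)`. As long as no `a - c w` vanishes, the degree
is therefore preserved and the roots are moved by the inverse Möbius map. Here that inverse is the
Cayley transform `w ↦ (w - i) / (w + i)`, which carries the real line to the unit circle and
conjugation, the reflection in the line, to `z ↦ 1 / conj z`, the reflection in the circle.
-/

section Homogenize

variable {R : Type*} [CommRing R]

lemma homogenize_multiset_prod_X_sub_C (s : Multiset R) :
    (s.map fun w => X - C w).prod.homogenize s.card =
      (s.map fun w => MvPolynomial.X 0 - MvPolynomial.C w * MvPolynomial.X 1).prod := by
  nontriviality R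
  induction s using Multiset.induction with
  | empty => simp
  | cons w s ih =>
    rw [Multiset.map_cons, Multiset.map_cons, Multiset.prod_cons, Multiset.prod_cons,
      Multiset.card_cons, add_comm, homogenize_mul _ _ (natDegree_X_sub_C_le w)
        (natDegree_multiset_prod_X_sub_C_eq_card s).le, ih]
    simp

variable [IsDomain R]

lemma homogenize_natDegree_eq_prod_roots {p : R[X]} (hp : p.Splits) :
    p.homogenize p.natDegree = MvPolynomial.C p.leadingCoeff *
      (p.roots.map fun w => MvPolynomial.X 0 - MvPolynomial.C w * MvPolynomial.X 1).prod := by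
  rw [← homogenize_multiset_prod_X_sub_C, ← homogenize_C_mul, ← hp.eq_prod_roots,
    hp.natDegree_eq_card_roots]

lemma aeval_homogenize_natDegree_eq_prod_roots {A : Type*} [CommRing A] [Algebra R A] {p : R[X]}
    (hp : p.Splits) (x y : A) :
    MvPolynomial.aeval ![x, y] (p.homogenize p.natDegree) =
      algebraMap R A p.leadingCoeff * (p.roots.map fun w => x - algebraMap R A w * y).prod := by
  rw [homogenize_natDegree_eq_prod_roots hp]
  simp [map_multiset_prod]

end Homogenize

section MobiusTransform

/-- The polynomial `(c X + d) ^ n * p ((a X + b) / (c X + d))`, where `n` is the degree of `p`.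
Substituting numerator and denominator into the homogenization of `p` avoids the division. -/
noncomputable def mobiusTransform {R : Type*} [CommSemiring R] (a b c d : R) (p : R[X]) : R[X] :=
  MvPolynomial.aeval ![C a * X + C b, C c * X + C d] (p.homogenize p.natDegree)

lemma mobiusTransform_eq_sum {R : Type*} [CommSemiring R] (a b c d : R) (p : R[X]) :
    mobiusTransform a b c d p = ∑ k ∈ Finset.range (p.natDegree + 1),
      C (p.coeff k) * (C a * X + C b) ^ k * (C c * X + C d) ^ (p.natDegree - k) := by
  simp [mobiusTransform, homogenize, Finset.Nat.sum_antidiagonal_eq_sum_range_succ_mk,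
    MvPolynomial.aeval_monomial, Finsupp.prod_fintype, mul_assoc]

lemma mobiusTransform_eq_prod_roots {R : Type*} [CommRing R] [IsDomain R] {p : R[X]}
    (hp : p.Splits) (a b c d : R) :
    mobiusTransform a b c d p = C p.leadingCoeff *
      (p.roots.map fun w => C (a - w * c) * X - C (d * w - b)).prod := by
  have hfactor (w : R) :
      C a * X + C b - C w * (C c * X + C d) = C (a - w * c) * X - C (d * w - b) := by
    simp only [map_sub, map_mul]
    ring
  simp only [mobiusTransform, aeval_homogenize_natDegree_eq_prod_roots hp, algebraMap_eq, hfactor]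

variable {K : Type*} [Field K] {a c : K} {p : K[X]}

/-- The hypothesis `h` says that `p`, viewed as a binary form, does not vanish at the point
`(a : c)` of the projective line, the image of infinity under the Möbius map. -/
lemma mobiusTransform_eq_C_mul_prod_X_sub_C (hp : p.Splits)
    (h : MvPolynomial.aeval ![a, c] (p.homogenize p.natDegree) ≠ 0) (b d : K) :
    mobiusTransform a b c d p = C (MvPolynomial.aeval ![a, c] (p.homogenize p.natDegree)) *
      ((p.roots.map fun w => (d * w - b) / (a - w * c)).map fun z => X - C z).prod := by
  rw [aeval_homogenize_natDegree_eq_prod_roots hp, Algebra.algebraMap_self_apply] at h ⊢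
  have hne : ∀ w ∈ p.roots, a - w * c ≠ 0 := fun w hw hzero =>
    h (mul_eq_zero_of_right _ (Multiset.prod_eq_zero (Multiset.mem_map.mpr ⟨w, hw, hzero⟩)))
  have hfactor : ∀ w ∈ p.roots, C (a - w * c) * X - C (d * w - b) =
      C (a - w * c) * (X - C ((d * w - b) / (a - w * c))) := fun w hw => by
    rw [mul_sub, ← C_mul, mul_div_cancel₀ _ (hne w hw)]
  rw [mobiusTransform_eq_prod_roots hp, Multiset.map_congr rfl hfactor, Multiset.prod_map_mul,
    C_mul, mul_assoc, Multiset.map_map, map_multiset_prod, Multiset.map_map]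
  rfl

lemma roots_mobiusTransform (hp : p.Splits)
    (h : MvPolynomial.aeval ![a, c] (p.homogenize p.natDegree) ≠ 0) (b d : K) :
    (mobiusTransform a b c d p).roots = p.roots.map fun w => (d * w - b) / (a - w * c) := by
  rw [mobiusTransform_eq_C_mul_prod_X_sub_C hp h, roots_C_mul _ h, roots_multiset_prod_X_sub_C]

lemma natDegree_mobiusTransform (hp : p.Splits)
    (h : MvPolynomial.aeval ![a, c] (p.homogenize p.natDegree) ≠ 0) (b d : K) :
    (mobiusTransform a b c d p).natDegree = p.natDegree := by
  rw [mobiusTransform_eq_C_mul_prod_X_sub_C hp h, natDegree_C_mul h,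
    natDegree_multiset_prod_X_sub_C_eq_card, Multiset.card_map, hp.natDegree_eq_card_roots]

end MobiusTransform

section Cayley

/-- The Cayley transform, a Möbius map from the real line to the unit circle. At `w = -i`, which
it should send to infinity, it takes the junk value `0`. -/
noncomputable def cayleyTransform (w : ℂ) : ℂ :=
  (w - I) / (w + I)

lemma semiconj_cayleyTransform_conj_inv_conj :
    Function.Semiconj cayleyTransform (starRingEnd ℂ) fun z => ((starRingEnd ℂ) z)⁻¹ := by
  intro w
  simp [cayleyTransform, sub_eq_add_neg]

lemma mobiusTransform_neg_I_eq_sum (p : ℂ[X]) :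
    mobiusTransform (-I) (-I) 1 (-1) p = ∑ k ∈ Finset.range (p.natDegree + 1),
      C (p.coeff k * (-I) ^ k) * (X + C 1) ^ k * (X - C 1) ^ (p.natDegree - k) := by
  have hnum : C (-I) * X + C (-I) = C (-I) * (X + C 1) := by rw [C_1, mul_add, mul_one]
  have hden : C (1 : ℂ) * X + C (-1) = X - C 1 := by rw [C_1, one_mul, C_neg, C_1, sub_eq_add_neg]
  simp only [mobiusTransform_eq_sum, hnum, hden, mul_pow, C_mul, C_pow, mul_assoc]

lemma aeval_homogenize_neg_I_one (p : ℂ[X]) :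
    MvPolynomial.aeval ![-I, 1] (p.homogenize p.natDegree) = p.eval (-I) := by
  simp [aeval_homogenize_of_eq_one]

lemma roots_mobiusTransform_neg_I {p : ℂ[X]} (hp : p.eval (-I) ≠ 0) :
    (mobiusTransform (-I) (-I) 1 (-1) p).roots = p.roots.map cayleyTransform := by
  rw [← aeval_homogenize_neg_I_one] at hp
  rw [roots_mobiusTransform (IsAlgClosed.splits p) hp]
  refine Multiset.map_congr rfl fun w _ => ?_
  rw [cayleyTransform, ← neg_div_neg_eq]
  ring_nf

end Cayley

/-- The Möbius transformation `T(z) = (z-1)^n p(W(z))`, `W(z) = -i(z+1)/(z-1)`,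
maps a self-conjugate polynomial `p` of degree `n` with `p(-i) ≠ 0` to a
self-inversive polynomial `T` of degree `n`. -/
theorem mobius_maps_sc_to_si (p : Polynomial ℂ) (n : ℕ)
    (hdeg : p.natDegree = n) (hn : p.coeff n ≠ 0) (hmi : p.eval (-Complex.I) ≠ 0)
    (hSC : p.roots.map (starRingEnd ℂ) = p.roots)
    (T : Polynomial ℂ)
    (hT : T = ∑ k ∈ Finset.range (n + 1),
      Polynomial.C (p.coeff k * (-Complex.I) ^ k) *
        (Polynomial.X + Polynomial.C 1) ^ k *
        (Polynomial.X - Polynomial.C 1) ^ (n - k)) :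
    T.natDegree = n ∧ T.roots.map (fun z => ((starRingEnd ℂ) z)⁻¹) = T.roots := by
  subst hdeg
  rw [← mobiusTransform_neg_I_eq_sum] at hT
  subst hT
  constructor
  · exact natDegree_mobiusTransform (IsAlgClosed.splits p)
      ((aeval_homogenize_neg_I_one p).trans_ne hmi) _ _
  · rw [roots_mobiusTransform_neg_I hmi, Multiset.map_map,
      ← semiconj_cayleyTransform_conj_inv_conj.comp_eq, ← Multiset.map_map, hSC]
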